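/- For every complex number w with Re(w) > 0 and every real c > 0, (1/(2πi)) ∫_{c-i∞}^{c+i∞} Γ(s) w^{-s} ds = e^{-w}, where w^{-s} = exp(-s Log w) with the principal logarithm. -/

import Mathlib

open Complex

open MeasureTheory Set Filter Topology in
lemma aux_norm (s w : ℂ) {x : ℝ} (hx : 0 < x) :
    ‖(x : ℂ) ^ (s - 1) * Complex.exp (-(w * x))‖ =
      x ^ (s.re - 1) * Real.exp (-w.re * x) := by
  rw [norm_mul, Complex.norm_cpow_eq_rpow_re_of_pos hx, Complex.norm_exp]
  simp

open MeasureTheory Set Filter Topology in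
lemma aux_real (a b : ℝ) (ha : 0 < a) (hb : 0 < b) :
    IntegrableOn (fun x : ℝ => x ^ (a - 1) * Real.exp (-b * x)) (Ioi 0) := by
  have := integrableOn_rpow_mul_exp_neg_mul_rpow (p := 1) (s := a - 1) (b := b)
    (by linarith) (by norm_num) hb
  simpa using this

open MeasureTheory Set Filter Topology in
lemma aux_meas (s w : ℂ) :
    AEStronglyMeasurable (fun x : ℝ => (x : ℂ) ^ (s - 1) * Complex.exp (-(w * x)))
      (volume.restrict (Ioi 0)) := by
  apply ContinuousOn.aestronglyMeasurable _ measurableSet_Ioi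
  intro x hx
  have hx : 0 < x := hx
  apply ContinuousAt.continuousWithinAt
  apply ContinuousAt.mul
  · exact continuousAt_ofReal_cpow_const _ _ (Or.inr hx.ne')
  · fun_prop

open MeasureTheory Set Filter Topology in
lemma aux_int (s w : ℂ) (hs : 0 < s.re) (hw : 0 < w.re) :
    IntegrableOn (fun x : ℝ => (x : ℂ) ^ (s - 1) * Complex.exp (-(w * x))) (Ioi 0) := by
  refine (aux_real s.re w.re hs hw).mono' (aux_meas s w) ?_
  filter_upwards [ae_restrict_mem measurableSet_Ioi] with x hx
  exact (aux_norm s w hx).le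

open MeasureTheory Set Filter Topology in
lemma aux_diff (s w : ℂ) (hs : 0 < s.re) (hw : 0 < w.re) :
    DifferentiableAt ℂ
      (fun w : ℂ => ∫ x : ℝ in Ioi 0, (x : ℂ) ^ (s - 1) * Complex.exp (-(w * x))) w := by
  have hU : {z : ℂ | w.re / 2 < z.re} ∈ 𝓝 w :=
    (isOpen_lt continuous_const Complex.continuous_re).mem_nhds (by simp [hw])
  have key := hasDerivAt_integral_of_dominated_loc_of_deriv_le (𝕜 := ℂ)
    (μ := volume.restrict (Ioi (0 : ℝ)))
    (F := fun (w : ℂ) (x : ℝ) => (x : ℂ) ^ (s - 1) * Complex.exp (-(w * x)))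
    (F' := fun (w : ℂ) (x : ℝ) => (x : ℂ) ^ (s - 1) * (Complex.exp (-(w * x)) * (-x)))
    (bound := fun x : ℝ => x ^ (s.re + 1 - 1) * Real.exp (-(w.re / 2) * x))
    (x₀ := w) hU
    (Eventually.of_forall fun z => aux_meas s z) (aux_int s w hs hw) ?_ ?_
    (aux_real (s.re + 1) (w.re / 2) (by linarith) (by linarith)) ?_
  · exact key.2.differentiableAt
  · have h := (aux_meas s w).mul
      ((Complex.continuous_ofReal.neg).aestronglyMeasurable (μ := volume.restrict (Ioi (0 : ℝ))))
    refine h.congr (Eventually.of_forall fun x => ?_)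
    simp [mul_assoc]
  · filter_upwards [ae_restrict_mem measurableSet_Ioi] with x hx z hz
    have hx : 0 < x := hx
    have hz : w.re / 2 < z.re := hz
    rw [← mul_assoc, norm_mul, aux_norm s z hx, norm_neg, Complex.norm_real, Real.norm_eq_abs,
      abs_of_pos hx]
    have e : x ^ (s.re + 1 - 1) = x ^ (s.re - 1) * x := by
      rw [← Real.rpow_add_one hx.ne']; congr 1; ring
    rw [e, mul_right_comm]
    gcongr
  · refine Eventually.of_forall fun x z _ => ?_
    have h1 : HasDerivAt (fun z : ℂ => -(z * (x : ℂ))) (-(x : ℂ)) z := by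
      simpa using (hasDerivAt_mul_const (x : ℂ) (x := z)).fun_neg
    exact (h1.cexp).const_mul _

open MeasureTheory Set Filter Topology in
lemma aux_formula (s w : ℂ) (hs : 0 < s.re) (hw : 0 < w.re) :
    (∫ x : ℝ in Ioi 0, (x : ℂ) ^ (s - 1) * Complex.exp (-(w * x))) =
      Complex.Gamma s * w ^ (-s) := by
  have hopen : IsOpen {z : ℂ | 0 < z.re} := isOpen_lt continuous_const Complex.continuous_re
  have hconv : Convex ℝ {z : ℂ | 0 < z.re} := convex_halfSpace_re_gt 0
  have hf : AnalyticOnNhd ℂ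
      (fun w : ℂ => ∫ x : ℝ in Ioi 0, (x : ℂ) ^ (s - 1) * Complex.exp (-(w * x)))
      {z : ℂ | 0 < z.re} :=
    DifferentiableOn.analyticOnNhd
      (fun z hz => (aux_diff s z hs hz).differentiableWithinAt) hopen
  have hg : AnalyticOnNhd ℂ (fun w : ℂ => Complex.Gamma s * w ^ (-s)) {z : ℂ | 0 < z.re} := by
    refine DifferentiableOn.analyticOnNhd (fun z hz => ?_) hopen
    refine DifferentiableAt.differentiableWithinAt ?_
    exact ((differentiableAt_id.cpow_const (Or.inl hz))).const_mul _
  refine hf.eqOn_of_preconnected_of_frequently_eq hg hconv.isPreconnected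
    (z₀ := 1) (by simp) ?_ hw
  have ht : Tendsto (fun r : ℝ => (r : ℂ)) (𝓝[>] 1) (𝓝[≠] 1) := by
    refine tendsto_nhdsWithin_iff.2 ⟨?_, ?_⟩
    · exact (Complex.continuous_ofReal.tendsto' 1 1 (by simp)).mono_left nhdsWithin_le_nhds
    · filter_upwards [self_mem_nhdsWithin] with r hr
      have hr : 1 < r := hr
      simpa using hr.ne'
  refine ht.frequently (Eventually.frequently ?_)
  filter_upwards [self_mem_nhdsWithin] with r hr
  have hr : 1 < r := hr
  have hr0 : 0 < r := by linarith
  rw [Complex.integral_cpow_mul_exp_neg_mul_Ioi hs hr0, mul_comm, one_div,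
    Complex.inv_cpow, Complex.cpow_neg]
  rw [Complex.arg_ofReal_of_nonneg hr0.le]
  exact Real.pi_pos.ne

open MeasureTheory Set Filter Topology in
lemma aux_normcpow (w : ℂ) (hw : w ≠ 0) (c t : ℝ) :
    ‖w ^ (-((c : ℂ) + t * I))‖ = ‖w‖ ^ (-c) * Real.exp (w.arg * t) := by
  rw [Complex.norm_cpow_of_ne_zero hw]
  simp [Real.exp_neg]

open MeasureTheory Set Filter Topology in
lemma aux_bound (θ : ℝ) (h1 : |θ| < Real.pi / 2) (c : ℝ) (hc : 0 < c) :
    ∃ C : ℝ, ∀ t : ℝ, ‖Complex.Gamma (c + t * I)‖ * Real.exp (θ * t) ≤ C := by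
  obtain ⟨h2, h3⟩ := abs_lt.1 h1
  have hre : (Complex.exp (θ * I)).re = Real.cos θ := Complex.exp_ofReal_mul_I_re θ
  have hcos : 0 < Real.cos θ := Real.cos_pos_of_mem_Ioo ⟨by linarith, h3⟩
  refine ⟨∫ x : ℝ in Ioi 0, x ^ (c - 1) * Real.exp (-Real.cos θ * x), fun t => ?_⟩
  have hs : (c + t * I : ℂ).re = c := by simp
  have h := aux_formula (c + t * I) (Complex.exp (θ * I)) (by rw [hs]; exact hc)
    (by rw [hre]; exact hcos)
  have h4 : (Complex.exp (θ * I)).arg = θ := by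
    rw [Complex.arg_exp_mul_I, toIocMod_eq_self]
    constructor <;> linarith [Real.pi_pos]
  have h5 := aux_normcpow (Complex.exp (θ * I)) (Complex.exp_ne_zero _) c t
  rw [h4, Complex.norm_exp_ofReal_mul_I, Real.one_rpow, one_mul] at h5
  rw [← h5, ← norm_mul, ← h]
  refine (norm_integral_le_integral_norm _).trans (le_of_eq ?_)
  refine setIntegral_congr_fun measurableSet_Ioi fun x hx => ?_
  have := aux_norm (c + t * I) (Complex.exp (θ * I)) hx
  rw [hs, hre] at this
  exact this

open MeasureTheory Set Filter Topology in
lemma aux_vert (w : ℂ) (hw : 0 < w.re) (c : ℝ) (hc : 0 < c) :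
    Integrable (fun t : ℝ => Complex.Gamma (c + t * I) * w ^ (-((c : ℂ) + t * I))) := by
  have hw0 : w ≠ 0 := by rintro rfl; simp at hw
  have harg : |w.arg| < Real.pi / 2 := Complex.abs_arg_lt_pi_div_two_iff.2 (Or.inl hw)
  obtain ⟨φ, hφ1, hφ2⟩ := exists_between harg
  have hφ0 : 0 ≤ φ := (abs_nonneg _).trans hφ1.le
  obtain ⟨C1, hC1⟩ := aux_bound φ (by rwa [abs_of_nonneg hφ0]) c hc
  obtain ⟨C2, hC2⟩ := aux_bound (-φ) (by rwa [abs_neg, abs_of_nonneg hφ0]) c hc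
  have hcont : Continuous
      (fun t : ℝ => Complex.Gamma (c + t * I) * w ^ (-((c : ℂ) + t * I))) := by
    refine Continuous.mul ?_ ?_
    · rw [continuous_iff_continuousAt]
      intro t
      have : ContinuousAt Complex.Gamma (c + t * I) := by
        refine (Complex.differentiableAt_Gamma _ fun m hm => ?_).continuousAt
        have := congrArg Complex.re hm
        simp at this
        have : (0 : ℝ) ≤ m := m.cast_nonneg
        linarith
      exact ContinuousAt.comp (f := fun t : ℝ => (c + t * I : ℂ)) this (by fun_prop)
    · exact Continuous.const_cpow (by fun_prop) (Or.inl hw0)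
  have hpos : 0 < φ - |w.arg| := by linarith
  have hI : Integrable (fun t : ℝ => Real.exp (-(φ - |w.arg|) * |t|)) := by
    rw [← integrableOn_univ, ← Set.Iic_union_Ioi (a := (0 : ℝ)), integrableOn_union]
    constructor
    · refine (integrableOn_exp_mul_Iic hpos 0).congr_fun (fun x hx => ?_) measurableSet_Iic
      have hx : x ≤ 0 := hx
      simp only [abs_of_nonpos hx, neg_mul_neg]
    · refine (integrableOn_exp_mul_Ioi (neg_lt_zero.2 hpos) 0).congr_fun
        (fun x hx => ?_) measurableSet_Ioi
      have hx : 0 < x := hx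
      simp only [abs_of_pos hx]
  refine (hI.const_mul (max C1 C2 * ‖w‖ ^ (-c))).mono' hcont.aestronglyMeasurable
    (Eventually.of_forall fun t => ?_)
  rw [norm_mul, aux_normcpow w hw0]
  have hb : ‖Complex.Gamma (c + t * I)‖ * Real.exp (φ * |t|) ≤ max C1 C2 := by
    rcases abs_cases t with ⟨h, _⟩ | ⟨h, _⟩
    · rw [h]; exact (hC1 t).trans (le_max_left _ _)
    · rw [h, mul_neg, ← neg_mul]; exact (hC2 t).trans (le_max_right _ _)
  have he : Real.exp (w.arg * t) ≤ Real.exp (φ * |t|) * Real.exp (-(φ - |w.arg|) * |t|) := by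
    rw [← Real.exp_add]
    apply Real.exp_le_exp.2
    have := le_abs_self (w.arg * t)
    rw [abs_mul] at this
    linarith
  calc ‖Complex.Gamma (c + t * I)‖ * (‖w‖ ^ (-c) * Real.exp (w.arg * t))
      ≤ ‖Complex.Gamma (c + t * I)‖ *
        (‖w‖ ^ (-c) * (Real.exp (φ * |t|) * Real.exp (-(φ - |w.arg|) * |t|))) := by gcongr
    _ = (‖Complex.Gamma (c + t * I)‖ * Real.exp (φ * |t|)) * ‖w‖ ^ (-c) *
        Real.exp (-(φ - |w.arg|) * |t|) := by ring
    _ ≤ _ := by gcongr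

/-- Cahen–Mellin formula: the vertical line `Re s = c` is parametrized by
`s = c + i t`, so that `(1/(2πi)) ∫ ds = (1/(2π)) ∫ dt`. -/
theorem stmt_8 (w : ℂ) (hw : 0 < w.re) (c : ℝ) (hc : 0 < c) :
    (1 / (2 * Real.pi) : ℂ) *
        (∫ t : ℝ, Complex.Gamma (c + t * I) * w ^ (-((c : ℂ) + t * I))) =
      Complex.exp (-w) := by
  have hm : ∀ t : ℝ, mellin (fun x : ℝ => Complex.exp (-(w * x))) (c + t * I) =
      Complex.Gamma (c + t * I) * w ^ (-((c : ℂ) + t * I)) := fun t =>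
    aux_formula (c + t * I) w (by simpa using hc) hw
  have h := mellinInv_mellin_eq c (fun x : ℝ => Complex.exp (-(w * x))) (x := 1) one_pos
    (aux_int c w (by simpa using hc) hw)
    (by
      unfold VerticalIntegrable
      simp_rw [hm]
      exact aux_vert w hw c hc)
    (by fun_prop)
  unfold mellinInv at h
  simp_rw [hm] at h
  simpa using h
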